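/- Define u : ℝ × (0,∞) → ℝ by u(x,t) = 1 for x < (2−√2)t and u(x,t) = 0 for x ≥ (2−√2)t. Then u is NOT a weak solution of the inviscid Burgers equation ∂_t u + ∂_x(u²/2) = 0: there exists a compactly supported smooth test function φ on ℝ × (0,∞) with ∫∫ (u ∂_t φ + (u²/2) ∂_x φ) dx dt ≠ 0. -/

import Mathlib

open MeasureTheory

/-!
The field is a shock with left state `1` and right state `0` moving at speed `c = 2 - √2`, which
violates the Rankine–Hugoniot condition `c = 1 / 2`. To detect this, take a test function of the
form `φ(x, t) = ψ(x - c t) η(t)` with `ψ`, `η` bump functions around `0` and `1`. In the moving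
frame `y = x - c t`, a measure-preserving change of variables, the weak formulation reads
`∫∫_{y < 0} ((1 / 2 - c) ψ'(y) η(t) + ψ(y) η'(t)) dy dt = (1 / 2 - c) ψ(0) ∫ η`,
since `∫ η' = 0` and `∫_{y < 0} ψ' = ψ(0)`. All three factors on the right are nonzero.
-/

/-- Passing to the frame moving with speed `c` preserves Lebesgue measure. Time is listed first in
the target, so that the map is a coordinate swap followed by a shear of the second coordinate. -/
lemma measurePreserving_movingFrame (c : ℝ) :
    MeasurePreserving (fun p : ℝ × ℝ => (p.2, p.1 - c * p.2)) (volume : Measure (ℝ × ℝ))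
      ((volume : Measure ℝ).prod volume) := by
  have h : MeasurePreserving (fun p : ℝ × ℝ => (id p.1, p.2 - c * p.1))
      ((volume : Measure ℝ).prod volume) ((volume : Measure ℝ).prod volume) := by
    refine (MeasurePreserving.id (volume : Measure ℝ)).skew_product
      (g := fun t x => x - c * t) ?_ ?_
    · exact measurable_snd.sub (measurable_fst.const_mul c)
    · exact Filter.Eventually.of_forall fun t =>
        (measurePreserving_sub_right (volume : Measure ℝ) (c * t)).map_eq
  exact h.comp (Measure.measurePreserving_swap (μ := (volume : Measure ℝ)) (ν := volume))

lemma fderiv_movingFrame (c : ℝ) {ψ η : ℝ → ℝ} (hψ : Differentiable ℝ ψ)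
    (hη : Differentiable ℝ η) (p v : ℝ × ℝ) :
    fderiv ℝ (fun p : ℝ × ℝ => ψ (p.1 - c * p.2) * η p.2) p v =
      deriv ψ (p.1 - c * p.2) * (v.1 - c * v.2) * η p.2 +
        ψ (p.1 - c * p.2) * (deriv η p.2 * v.2) := by
  have h1 : HasFDerivAt (fun p : ℝ × ℝ => p.1 - c * p.2)
      (ContinuousLinearMap.fst ℝ ℝ ℝ - c • ContinuousLinearMap.snd ℝ ℝ ℝ) p :=
    hasFDerivAt_fst.sub (hasFDerivAt_snd.const_mul c)
  have h2 := (hψ (p.1 - c * p.2)).hasDerivAt.comp_hasFDerivAt p h1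
  have h3 := (hη p.2).hasDerivAt.comp_hasFDerivAt p (hasFDerivAt_snd (𝕜 := ℝ) (p := p))
  have h4 := (h2.mul h3).fderiv
  change fderiv ℝ (fun p : ℝ × ℝ => ψ (p.1 - c * p.2) * η p.2) p = _ at h4
  rw [h4]
  simp
  ring

/-- The Rankine–Hugoniot defect: the weak Burgers functional of the shock from `1` to `0` moving
at speed `c`, evaluated on a test function that is a product in the moving frame. -/
lemma integral_burgers_movingFrame (c : ℝ) {ψ η : ℝ → ℝ} (hψ : ContDiff ℝ 1 ψ)
    (hη : ContDiff ℝ 1 η) (hψc : HasCompactSupport ψ) (hηc : HasCompactSupport η)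
    (u : ℝ → ℝ → ℝ) (hu : ∀ x t, u x t = if x < c * t then 1 else 0) :
    ∫ p : ℝ × ℝ,
        (u p.1 p.2 * fderiv ℝ (fun p : ℝ × ℝ => ψ (p.1 - c * p.2) * η p.2) p (0, 1) +
          (u p.1 p.2) ^ 2 / 2 *
            fderiv ℝ (fun p : ℝ × ℝ => ψ (p.1 - c * p.2) * η p.2) p (1, 0)) =
      (1 / 2 - c) * ψ 0 * ∫ t, η t := by
  have iψ : Integrable ψ := hψ.continuous.integrable_of_hasCompactSupport hψc
  have iη : Integrable η := hη.continuous.integrable_of_hasCompactSupport hηc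
  have iψ' : Integrable (deriv ψ) :=
    (hψ.continuous_deriv le_rfl).integrable_of_hasCompactSupport hψc.deriv
  have iη' : Integrable (deriv η) :=
    (hη.continuous_deriv le_rfl).integrable_of_hasCompactSupport hηc.deriv
  have hη0 : ∫ t, deriv η t = 0 :=
    integral_eq_zero_of_hasDerivAt_of_integrable
      (fun t => (hη.differentiable one_ne_zero t).hasDerivAt) iη' iη
  have hψ0 : ∫ y, (Set.Iio (0 : ℝ)).indicator (deriv ψ) y = ψ 0 := by
    rw [integral_indicator measurableSet_Iio, ← integral_Iic_eq_integral_Iio,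
      hψc.integral_Iic_deriv_eq hψ]
  have iA := (iη.const_mul (1 / 2 - c)).mul_prod (iψ'.indicator (measurableSet_Iio (a := (0 : ℝ))))
  have iB := iη'.mul_prod (iψ.indicator (measurableSet_Iio (a := (0 : ℝ))))
  have hmp := measurePreserving_movingFrame c
  have key := integral_map (μ := (volume : Measure (ℝ × ℝ))) hmp.measurable.aemeasurable
    (hmp.map_eq.symm ▸ (iA.add iB).aestronglyMeasurable)
  rw [hmp.map_eq, integral_add' iA iB, integral_prod_mul (fun t => (1 / 2 - c) * η t),
    integral_prod_mul (deriv η), hη0, hψ0, integral_const_mul] at key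
  have hcongr : ∀ p : ℝ × ℝ,
      (u p.1 p.2 * fderiv ℝ (fun p : ℝ × ℝ => ψ (p.1 - c * p.2) * η p.2) p (0, 1) +
          (u p.1 p.2) ^ 2 / 2 *
            fderiv ℝ (fun p : ℝ × ℝ => ψ (p.1 - c * p.2) * η p.2) p (1, 0)) =
        (1 / 2 - c) * η p.2 * (Set.Iio (0 : ℝ)).indicator (deriv ψ) (p.1 - c * p.2) +
          deriv η p.2 * (Set.Iio (0 : ℝ)).indicator ψ (p.1 - c * p.2) := by
    intro p
    rw [fderiv_movingFrame c (hψ.differentiable one_ne_zero) (hη.differentiable one_ne_zero),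
      fderiv_movingFrame c (hψ.differentiable one_ne_zero) (hη.differentiable one_ne_zero), hu]
    by_cases h : p.1 < c * p.2
    · have h' : p.1 - c * p.2 ∈ Set.Iio (0 : ℝ) := sub_neg.2 h
      simp only [h, if_true, Set.indicator_of_mem h']
      ring
    · have h' : p.1 - c * p.2 ∉ Set.Iio (0 : ℝ) := fun h' => h (sub_neg.1 h')
      simp only [h, if_false, Set.indicator_of_notMem h']
      ring
  simp only [hcongr]
  refine Eq.trans key.symm ?_
  ring

/-- The field with a discontinuity line of speed `2 − √2` separating `u = 1` from `u = 0`
is NOT a weak solution of the inviscid Burgers equation on `ℝ × (0,∞)`. -/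
theorem stmt5
    (u : ℝ → ℝ → ℝ)
    (hu : ∀ x t, u x t = if x < (2 - Real.sqrt 2) * t then 1 else 0) :
    ∃ φ : ℝ × ℝ → ℝ, ContDiff ℝ (⊤ : ℕ∞) φ ∧ HasCompactSupport φ ∧
      tsupport φ ⊆ {p : ℝ × ℝ | 0 < p.2} ∧
      ∫ p : ℝ × ℝ,
        (u p.1 p.2 * fderiv ℝ φ p (0, 1) +
          (u p.1 p.2) ^ 2 / 2 * fderiv ℝ φ p (1, 0)) ≠ 0 := by
  set c : ℝ := 2 - Real.sqrt 2 with hc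
  have hc1 : 1 / 2 < c := by
    have : Real.sqrt 2 < 3 / 2 := by
      rw [Real.sqrt_lt' (by norm_num)]
      norm_num
    linarith
  have hc2 : c < 1 := by
    have : 1 < Real.sqrt 2 := by
      rw [Real.lt_sqrt (by norm_num)]
      norm_num
    linarith
  let ψ : ContDiffBump (0 : ℝ) := ⟨1, 2, by norm_num, by norm_num⟩
  let η : ContDiffBump (1 : ℝ) := ⟨1 / 4, 1 / 2, by norm_num, by norm_num⟩
  -- On the support, `|x - c t| ≤ 2` and `|t - 1| ≤ 1 / 2`; with `0 < c < 1` this bounds `x`.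
  have hK : Function.support (fun p : ℝ × ℝ => ψ (p.1 - c * p.2) * η p.2) ⊆
      Set.Icc (-4 : ℝ) 4 ×ˢ Set.Icc (1 / 2 : ℝ) (3 / 2) := by
    intro p hp
    have hp1 : p.1 - c * p.2 ∈ Function.support ψ := left_ne_zero_of_mul hp
    have hp2 : p.2 ∈ Function.support η := right_ne_zero_of_mul hp
    rw [ContDiffBump.support_eq, Real.ball_eq_Ioo] at hp1 hp2
    obtain ⟨a1, a2⟩ : 0 - 2 < p.1 - c * p.2 ∧ p.1 - c * p.2 < 0 + 2 := hp1
    obtain ⟨b1, b2⟩ : 1 - 1 / 2 < p.2 ∧ p.2 < 1 + 1 / 2 := hp2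
    refine ⟨⟨?_, ?_⟩, ⟨?_, ?_⟩⟩ <;> nlinarith
  have hKc : IsCompact (Set.Icc (-4 : ℝ) 4 ×ˢ Set.Icc (1 / 2 : ℝ) (3 / 2)) :=
    isCompact_Icc.prod isCompact_Icc
  refine ⟨fun p => ψ (p.1 - c * p.2) * η p.2, ?_, ?_, ?_, ?_⟩
  · exact (ψ.contDiff.comp (contDiff_fst.sub (contDiff_const.mul contDiff_snd))).mul
      (η.contDiff.comp contDiff_snd)
  · exact HasCompactSupport.of_support_subset_isCompact hKc hK
  · intro p hp
    have h := (closure_minimal hK hKc.isClosed hp).2.1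
    exact lt_of_lt_of_le (by norm_num) h
  · rw [integral_burgers_movingFrame c ψ.contDiff η.contDiff ψ.hasCompactSupport
      η.hasCompactSupport u hu]
    have h1 : ψ 0 = 1 := ψ.eventuallyEq_one.eq_of_nhds
    have h2 : 0 < ∫ t, η t := η.integral_pos
    rw [h1]
    exact mul_ne_zero (by linarith) h2.ne'
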